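/- (Exact moment formula for the explicit pseudorandom states of Theorem 3's construction.) Let n ≥ 1, d ≥ 1, and t ≥ 1 satisfy 2t ≤ d + 1 and t < 2^n. Let F = GF(2^n) be the finite field with 2^n elements, and fix any bijection ι : F → {0, 1, …, 2^n − 1}. For each tuple of coefficients c = (c_0, …, c_d) ∈ F^{d+1}, let p_c(X) = c_0 + c_1 X + ⋯ + c_d X^d, and define the unit vector φ_c ∈ ℂ^F by φ_c(x) = 2^{−n/2} · exp(2πi · ι(p_c(x)) / 2^n). Then for all tuples x_1, …, x_t ∈ F and y_1, …, y_t ∈ F, the average over a uniformly random c ∈ F^{d+1} of ∏_{i=1}^{t} φ_c(x_i) · conj(φ_c(y_i)) equals 2^{−nt} if the multiset {x_1, …, x_t} equals the multiset {y_1, …, y_t}, and equals 0 otherwise. (Equivalently, the average of the t-fold tensor power (|φ_c⟩⟨φ_c|)^{⊗t} over random c is the matrix whose ((x_1,…,x_t),(y_1,…,y_t)) entry is 2^{−nt} times the indicator that the two multisets coincide.) -/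

import Mathlib

open scoped Classical

/-- The explicit pseudorandom state `φ_c = 2^{-n/2} ∑_{x ∈ GF(2^n)} e^{2πi·ι(p_c(x))/2^n} |x⟩`,
given as its amplitude at `x`, where `p_c` is the polynomial with coefficient tuple `c` and
`ι` is a fixed bijection from `GF(2^n)` to `{0,…,2^n-1}`. -/
noncomputable def designState {n d : ℕ} (ι : GaloisField 2 n ≃ Fin (2 ^ n))
    (c : Fin (d + 1) → GaloisField 2 n) (x : GaloisField 2 n) : ℂ :=
  ((Real.sqrt (2 ^ n) : ℂ))⁻¹ *
    Complex.exp (2 * Real.pi * Complex.I *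
      ((ι (∑ j, c j * x ^ (j : ℕ)) : Fin (2 ^ n)) : ℕ) / 2 ^ n)

/-!
The points occurring among the `xᵢ` and `yᵢ` number at most `2t ≤ d + 1`, so by Lagrange
interpolation the values of `p_c` at these points are independent and uniform on the field when
`c` is uniform. The moment therefore factors over the distinct points `s`, and a point occurring
`a` times among the `xᵢ` and `b` times among the `yᵢ` contributes the average of `ζ ^ (k * (a - b))`
over `k` modulo `N`, with `ζ` a primitive `N`-th root of unity. As `a, b < N`, this is `1` if
`a = b` and `0` otherwise.
-/

open Finset Function Polynomial
open scoped BigOperators ComplexConjugate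

theorem expect_comp_of_surjective {G H Φ M : Type*} [AddGroup G] [AddGroup H] [Fintype G]
    [Fintype H] [FunLike Φ G H] [AddMonoidHomClass Φ G H] [AddCommMonoid M] [Module ℚ≥0 M]
    (f : Φ) (hf : Surjective f) (g : H → M) :
    𝔼 x, g (f x) = 𝔼 y, g y := by
  have shift (y : H) : 𝔼 x, g (f x) = 𝔼 x, g (f x + y) := by
    obtain ⟨u, rfl⟩ := hf y
    exact (Fintype.expect_equiv (Equiv.addRight u) _ _ fun x => by simp).symm
  calc 𝔼 x, g (f x)
      = 𝔼 y, 𝔼 x, g (f x + y) := by simp only [← shift, Fintype.expect_const]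
    _ = 𝔼 x, 𝔼 y, g (f x + y) := expect_comm ..
    _ = 𝔼 _x : G, 𝔼 y, g y :=
        expect_congr rfl fun x _ => Fintype.expect_equiv (Equiv.addLeft (f x)) _ _ fun _ => rfl
    _ = 𝔼 y, g y := Fintype.expect_const _

theorem expect_pi_prod {κ α M : Type*} [Fintype κ] [DecidableEq κ] [Fintype α] [Semifield M]
    [CharZero M] (g : κ → α → M) :
    𝔼 p : κ → α, ∏ k, g k (p k) = ∏ k, 𝔼 a, g k a := by
  simp only [Fintype.expect_eq_sum_div_card, prod_div_distrib, prod_univ_sum,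
    Fintype.piFinset_univ, prod_const, card_univ, Fintype.card_pi, Nat.cast_pow]

theorem prod_map_eq_prod_pow_count {α M : Type*} [DecidableEq α] [CommMonoid M] {X : Multiset α}
    {S : Finset α} (hX : X.toFinset ⊆ S) (f : α → M) :
    (X.map f).prod = ∏ s ∈ S, f s ^ X.count s := by
  rw [prod_multiset_map_count]
  refine prod_subset hX fun s _ hs => ?_
  rw [Multiset.count_eq_zero.mpr (by simpa using hs), pow_zero]

theorem expect_pow_mul_inv_pow_of_isPrimitiveRoot {K : Type*} [Field K] [CharZero K] {N a b : ℕ}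
    {ζ : K} (hζ : IsPrimitiveRoot ζ N) (ha : a < N) (hb : b < N) :
    𝔼 k : Fin N, (ζ ^ (k : ℕ)) ^ a * ((ζ ^ (k : ℕ))⁻¹) ^ b = if a = b then 1 else 0 := by
  have : NeZero N := ⟨by omega⟩
  have hζ0 : ζ ≠ 0 := hζ.ne_zero (NeZero.ne N)
  set r : K := ζ ^ a / ζ ^ b with hr
  have term_eq (k : ℕ) : (ζ ^ k) ^ a * ((ζ ^ k)⁻¹) ^ b = r ^ k := by
    rw [hr, div_pow, inv_pow, ← div_eq_mul_inv, pow_right_comm, pow_right_comm ζ k b]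
  have r_eq_one_iff : r = 1 ↔ a = b := by
    rw [hr, div_eq_one_iff_eq (pow_ne_zero b hζ0)]
    exact ⟨hζ.pow_inj ha hb, congrArg _⟩
  have r_pow : r ^ N = 1 := by
    rw [hr, div_pow, pow_right_comm, pow_right_comm ζ b, hζ.pow_eq_one, one_pow, one_pow, div_one]
  simp only [term_eq]
  split_ifs with hab
  · simp only [r_eq_one_iff.mpr hab, one_pow, Fintype.expect_one]
  · rw [Fintype.expect_eq_sum_div_card, Fin.sum_univ_eq_sum_range (r ^ ·),
      geom_sum_eq (mt r_eq_one_iff.mp hab), r_pow, sub_self, zero_div, zero_div]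

section PolyEval

/-- The polynomial function `z ↦ c₀ + c₁ z + ⋯` with coefficient tuple `c`, as a linear function
of `c`. -/
def polyEval (F : Type*) [CommSemiring F] (m : ℕ) : (Fin m → F) →ₗ[F] F → F where
  toFun c z := ∑ j, c j * z ^ (j : ℕ)
  map_add' c c' := by ext z; simp only [Pi.add_apply, add_mul, sum_add_distrib]
  map_smul' a c := by
    ext z; simp only [Pi.smul_apply, smul_eq_mul, mul_assoc, mul_sum, RingHom.id_apply]

variable {F : Type*} [Field F]

theorem polyEval_comp_surjective {κ : Type*} [Fintype κ] {m : ℕ} {v : κ → F}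
    (hv : Injective v) (hm : Fintype.card κ ≤ m) :
    Surjective (LinearMap.funLeft F F v ∘ₗ polyEval F m) := by
  intro r
  have hdeg : Lagrange.interpolate univ v r ∈ degreeLT F m :=
    mem_degreeLT.mpr <| (Lagrange.degree_interpolate_lt r hv.injOn).trans_le (mod_cast hm)
  refine ⟨degreeLTEquiv F m ⟨_, hdeg⟩, funext fun k => ?_⟩
  exact (eval_eq_sum_degreeLTEquiv hdeg (v k)).symm.trans
    (Lagrange.eval_interpolate_at_node r hv.injOn (mem_univ k))

variable [Fintype F] {K : Type*} {m : ℕ}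

theorem expect_prod_polyEval [Semifield K] [CharZero K] {κ : Type*} [Fintype κ] {v : κ → F}
    (hv : Injective v) (hm : Fintype.card κ ≤ m) (g : κ → F → K) :
    𝔼 c, ∏ k, g k (polyEval F m c (v k)) = ∏ k, 𝔼 z, g k z :=
  calc 𝔼 c, ∏ k, g k (polyEval F m c (v k))
      = 𝔼 p : κ → F, ∏ k, g k (p k) :=
        expect_comp_of_surjective _ (polyEval_comp_surjective hv hm) fun p => ∏ k, g k (p k)
    _ = ∏ k, 𝔼 z, g k z := expect_pi_prod g

variable [DecidableEq F]

theorem expect_prod_map_polyEval [Semifield K] [CharZero K] {X Y : Multiset F}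
    (hXY : X.card + Y.card ≤ m) (f g : F → K) :
    𝔼 c, (X.map fun s => f (polyEval F m c s)).prod * (Y.map fun s => g (polyEval F m c s)).prod =
      ∏ s ∈ (X + Y).toFinset, 𝔼 z, f z ^ X.count s * g z ^ Y.count s := by
  have hcard : #(X + Y).toFinset ≤ m :=
    (Multiset.toFinset_card_le _).trans ((Multiset.card_add X Y).trans_le hXY)
  have hX : X.toFinset ⊆ (X + Y).toFinset := by simp
  have hY : Y.toFinset ⊆ (X + Y).toFinset := by simp
  simp only [prod_map_eq_prod_pow_count hX, prod_map_eq_prod_pow_count hY, ← prod_mul_distrib,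
    ← prod_coe_sort (X + Y).toFinset]
  exact expect_prod_polyEval Subtype.val_injective (by rwa [Fintype.card_coe])
    fun s z => f z ^ X.count s.val * g z ^ Y.count s.val

theorem expect_prod_map_pow_polyEval [Field K] [CharZero K] {N : ℕ} {ζ : K}
    (hζ : IsPrimitiveRoot ζ N) (ι : F ≃ Fin N) {X Y : Multiset F}
    (hX : X.card < N) (hY : Y.card < N) (hXY : X.card + Y.card ≤ m) :
    𝔼 c, (X.map fun s => ζ ^ (ι (polyEval F m c s) : ℕ)).prod *
        (Y.map fun s => (ζ ^ (ι (polyEval F m c s) : ℕ))⁻¹).prod =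
      if X = Y then 1 else 0 := by
  have moment (s : F) : 𝔼 z, (ζ ^ (ι z : ℕ)) ^ X.count s * ((ζ ^ (ι z : ℕ))⁻¹) ^ Y.count s =
      if X.count s = Y.count s then 1 else 0 := by
    rw [← expect_pow_mul_inv_pow_of_isPrimitiveRoot hζ ((X.count_le_card s).trans_lt hX)
      ((Y.count_le_card s).trans_lt hY)]
    exact Fintype.expect_equiv ι _ _ fun _ => rfl
  have count_eq_iff : (∀ s ∈ (X + Y).toFinset, X.count s = Y.count s) ↔ X = Y := by
    refine ⟨fun h => Multiset.ext.mpr fun s => ?_, fun h s _ => h ▸ rfl⟩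
    by_cases hs : s ∈ (X + Y).toFinset
    · exact h s hs
    · obtain ⟨hsX, hsY⟩ : s ∉ X ∧ s ∉ Y := by simpa using hs
      rw [Multiset.count_eq_zero.mpr hsX, Multiset.count_eq_zero.mpr hsY]
  rw [expect_prod_map_polyEval hXY (fun z => ζ ^ (ι z : ℕ)) fun z => (ζ ^ (ι z : ℕ))⁻¹]
  simp only [moment, prod_boole, count_eq_iff]

end PolyEval

section PhaseState

variable {F : Type*} [Field F] {N m : ℕ}

/-- The analogue of `designState` over a field with `N` elements. The root of unity `ζ` replaces
`e^{2πi/N}`, and `m` is the number of coefficients rather than the degree bound. -/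
noncomputable def phaseState (ζ : ℂ) (ι : F ≃ Fin N) (c : Fin m → F) (x : F) : ℂ :=
  ((Real.sqrt N : ℂ))⁻¹ * ζ ^ (ι (polyEval F m c x) : ℕ)

theorem designState_eq_phaseState {n d : ℕ} (ι : GaloisField 2 n ≃ Fin (2 ^ n)) :
    designState (d := d) ι =
      phaseState (Complex.exp (2 * Real.pi * Complex.I / (2 ^ n : ℕ))) ι := by
  ext c x
  rw [designState, phaseState, ← Complex.exp_nat_mul, mul_div_left_comm, mul_div_assoc']
  push_cast
  rfl

theorem phaseState_mul_conj {ζ : ℂ} (hζ : ‖ζ‖ = 1) (ι : F ≃ Fin N) (c : Fin m → F) (x y : F) :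
    phaseState ζ ι c x * conj (phaseState ζ ι c y) =
      (N : ℂ)⁻¹ *
        (ζ ^ (ι (polyEval F m c x) : ℕ) * (ζ ^ (ι (polyEval F m c y) : ℕ))⁻¹) := by
  have hsqrt : (Real.sqrt N : ℂ)⁻¹ * (Real.sqrt N : ℂ)⁻¹ = (N : ℂ)⁻¹ := by
    rw [← mul_inv, ← Complex.ofReal_mul, Real.mul_self_sqrt N.cast_nonneg, Complex.ofReal_natCast]
  rw [phaseState, phaseState, map_mul, map_inv₀, Complex.conj_ofReal, map_pow,
    ← Complex.inv_eq_conj hζ, inv_pow, mul_mul_mul_comm, hsqrt]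

theorem design_state_moments_general [Fintype F] [DecidableEq F] {κ : Type*} [Fintype κ]
    (hm : 2 * Fintype.card κ ≤ m) (hN : Fintype.card κ < N) {ζ : ℂ} (hζ : IsPrimitiveRoot ζ N)
    (ι : F ≃ Fin N) (x y : κ → F) :
    𝔼 c : Fin m → F, ∏ i, phaseState ζ ι c (x i) * conj (phaseState ζ ι c (y i)) =
      if Multiset.map x univ.val = Multiset.map y univ.val then
        ((N : ℂ) ^ Fintype.card κ)⁻¹
      else 0 := by
  have hnorm : ‖ζ‖ = 1 := hζ.norm'_eq_one (by omega)
  have hcard (z : κ → F) : (Multiset.map z univ.val).card = Fintype.card κ := by simp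
  have hphase := expect_prod_map_pow_polyEval (m := m) hζ ι (X := Multiset.map x univ.val)
    (Y := Multiset.map y univ.val) (by rwa [hcard]) (by rwa [hcard]) (by rw [hcard, hcard]; omega)
  simp only [Multiset.map_map, comp_apply, prod_map_val] at hphase
  simp only [phaseState_mul_conj hnorm, prod_mul_distrib, prod_const, card_univ, ← mul_expect,
    hphase, mul_ite, mul_one, mul_zero, inv_pow]

end PhaseState

/-- Exact moment formula for the explicit `t`-design states: the average over a uniformly
random coefficient tuple `c ∈ GF(2^n)^{d+1}` of `∏ᵢ φ_c(xᵢ) conj(φ_c(yᵢ))` equals `2^{-nt}`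
if the multisets `{x₁,…,x_t}` and `{y₁,…,y_t}` coincide, and `0` otherwise. -/
theorem design_state_moments {n d t : ℕ} [Fintype (GaloisField 2 n)] (hn : 1 ≤ n) (hd : 1 ≤ d) (ht : 1 ≤ t)
    (h2t : 2 * t ≤ d + 1) (ht2 : t < 2 ^ n)
    (ι : GaloisField 2 n ≃ Fin (2 ^ n))
    (x y : Fin t → GaloisField 2 n) :
    (∑ c : Fin (d + 1) → GaloisField 2 n,
        ∏ i, designState ι c (x i) * (starRingEnd ℂ) (designState ι c (y i))) /
        ((2 : ℂ) ^ n) ^ (d + 1) =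
      if Multiset.map x Finset.univ.val = Multiset.map y Finset.univ.val then
        ((2 : ℂ) ^ (n * t))⁻¹
      else 0 := by
  have hcard : Fintype.card (GaloisField 2 n) = 2 ^ n := by simpa using Fintype.card_congr ι
  have hmoment := design_state_moments_general (m := d + 1) (by simpa using h2t)
    (by simpa using ht2) (Complex.isPrimitiveRoot_exp (2 ^ n) (by positivity)) ι x y
  simpa [Fintype.expect_eq_sum_div_card, hcard, designState_eq_phaseState, pow_mul] using hmoment
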